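/- Let ε and b satisfy 0 < ε ≤ 1, 0 < b, and bε ≤ 1/2, and let u = (0, 0, aε) and c = (0, bε, 0). Then the geodesic distance between u and c is strictly greater than the Euclidean distance: d_g(u, c) > ‖u − c‖ = bε√(a²/b² + 1). -/

import Mathlib

open Real MeasureTheory

noncomputable section

/-- `ℝ³` with the Euclidean norm. -/
abbrev E3 : Type := EuclideanSpace ℝ (Fin 3)

/-- The bump function `f(y) = A (1 + cos (π y))`. -/
def f (A y : ℝ) : ℝ := A * (1 + Real.cos (Real.pi * y))

/-- The g-length of a path `γ` in the perturbed metric: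
`L_g(γ) = ∫₀¹ √(γ₁′(t)² + γ₂′(t)² + (1 + f(γ₂(t))) γ₃′(t)²) dt`. -/
def Lg (A : ℝ) (γ : ℝ → E3) : ℝ :=
  ∫ t in (0:ℝ)..1,
    Real.sqrt ((deriv γ t 0) ^ 2 + (deriv γ t 1) ^ 2
      + (1 + f A (γ t 1)) * (deriv γ t 2) ^ 2)

/-- The geodesic distance: the infimum of g-lengths of C¹ paths from `p` to `q`. -/
def dg (A : ℝ) (p q : E3) : ℝ :=
  sInf {L : ℝ | ∃ γ : ℝ → E3,
    ContDiff ℝ 1 γ ∧ γ 0 = p ∧ γ 1 = q ∧ L = Lg A γ}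

/-- A point of `ℝ³` from its three coordinates. -/
def pt (x y z : ℝ) : E3 := (EuclideanSpace.equiv (Fin 3) ℝ).symm ![x, y, z]

/-- `a = 1/√2`. -/
def a : ℝ := 1 / Real.sqrt 2

/-- `ξ₀ = √(1 + f(0)) − 1`. -/
def ξ₀ (A : ℝ) : ℝ := Real.sqrt (1 + f A 0) - 1

lemma f_nonneg' (A : ℝ) (hA : 0 < A) (y : ℝ) : 0 ≤ f A y := by
  unfold f
  have := Real.neg_one_le_cos (Real.pi * y)
  exact mul_nonneg hA.le (by linarith)

lemma coord_deriv (γ : ℝ → E3) (h : ContDiff ℝ 1 γ) (i : Fin 3) (t : ℝ) :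
    HasDerivAt (fun t => γ t i) (deriv γ t i) t := by
  have h1 : HasDerivAt γ (deriv γ t) t := (h.differentiable (by norm_num) t).hasDerivAt
  exact (EuclideanSpace.proj (𝕜 := ℝ) i).hasFDerivAt.comp_hasDerivAt t h1

lemma coord_cont (γ : ℝ → E3) (h : ContDiff ℝ 1 γ) (i : Fin 3) :
    Continuous (fun t => deriv γ t i) := by
  have h1 : Continuous (deriv γ) := h.continuous_deriv (by norm_num)
  exact (EuclideanSpace.proj (𝕜 := ℝ) i).continuous.comp h1

lemma calib (F k x y z : ℝ) (hF : 0 ≤ F) (hk : k ^ 2 ≤ 1) :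
    Real.sqrt (1 - k ^ 2 / (1 + F)) * y - k * z ≤ Real.sqrt (x ^ 2 + y ^ 2 + (1 + F) * z ^ 2) := by
  have h1 : k ^ 2 / (1 + F) ≤ 1 := by
    rw [div_le_one (by linarith)]; linarith
  set s := Real.sqrt (1 - k ^ 2 / (1 + F)) with hs
  have hs2 : s ^ 2 = 1 - k ^ 2 / (1 + F) := Real.sq_sqrt (by linarith)
  have hG : 0 < 1 + F := by linarith
  set m := k / (1 + F) with hm
  have hkm : k = m * (1 + F) := by rw [hm]; field_simp
  have hs3 : s ^ 2 = 1 - m ^ 2 * (1 + F) := by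
    rw [hs2, hkm]; field_simp
  apply Real.le_sqrt_of_sq_le
  rw [hkm]
  have e : y ^ 2 + (1 + F) * z ^ 2 - (s * y - m * (1 + F) * z) ^ 2
      = (1 + F) * (m * y + s * z) ^ 2 + (1 - m ^ 2 * (1 + F) - s ^ 2) * (y ^ 2 + (1 + F) * z ^ 2) := by
    ring
  rw [hs3] at e
  have : 0 ≤ (1 + F) * (m * y + s * z) ^ 2 := by positivity
  nlinarith [sq_nonneg x]

lemma Lg_ge (A k Y Z : ℝ) (hA : 0 < A) (hk : k ^ 2 ≤ 1) (γ : ℝ → E3) (hγ : ContDiff ℝ 1 γ)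
    (h0 : γ 0 = pt 0 0 Z) (h1 : γ 1 = pt 0 Y 0) :
    (∫ y in (0:ℝ)..Y, Real.sqrt (1 - k ^ 2 / (1 + f A y))) + k * Z ≤ Lg A γ := by
  have hfc : Continuous (f A) := by unfold f; fun_prop
  have hh : Continuous (fun y => Real.sqrt (1 - k ^ 2 / (1 + f A y))) := by
    refine (continuous_const.sub (continuous_const.div (continuous_const.add hfc) ?_)).sqrt
    intro y; have := f_nonneg' A hA y; show 1 + f A y ≠ 0; positivity
  have c0 := coord_cont γ hγ 0
  have c1 := coord_cont γ hγ 1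
  have c2 := coord_cont γ hγ 2
  have g1 : Continuous (fun t => γ t 1) :=
    (EuclideanSpace.proj (𝕜 := ℝ) (1 : Fin 3)).continuous.comp hγ.continuous
  have I1 := intervalIntegral.integral_comp_mul_deriv (a := 0) (b := 1)
    (f := fun t => γ t 1) (f' := fun t => deriv γ t 1)
    (g := fun y => Real.sqrt (1 - k ^ 2 / (1 + f A y)))
    (fun t _ => coord_deriv γ hγ 1 t) c1.continuousOn hh
  have I2 := intervalIntegral.integral_eq_sub_of_hasDerivAt (a := 0) (b := 1)
    (fun t _ => coord_deriv γ hγ 2 t) (c2.intervalIntegrable 0 1)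
  have e1 : γ 0 1 = 0 := by rw [h0]; simp [pt]
  have e2 : γ 1 1 = Y := by rw [h1]; simp [pt]
  have e3 : γ 0 2 = Z := by rw [h0]; simp [pt]
  have e4 : γ 1 2 = 0 := by rw [h1]; simp [pt]
  simp only [e1, e2, e3, e4, Function.comp_def] at I1 I2
  have hc := hh.comp g1
  simp only [Function.comp_def] at hc
  have hc' : Continuous (fun t => Real.sqrt (1 - k ^ 2 / (1 + f A (γ t 1))) * deriv γ t 1) :=
    hc.mul c1
  have hd := c2.const_mul k
  have : (∫ y in (0:ℝ)..Y, Real.sqrt (1 - k ^ 2 / (1 + f A y))) + k * Z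
      = ∫ t in (0:ℝ)..1, (Real.sqrt (1 - k ^ 2 / (1 + f A (γ t 1))) * deriv γ t 1
        - k * deriv γ t 2) := by
    rw [intervalIntegral.integral_sub (hc'.intervalIntegrable 0 1) (hd.intervalIntegrable 0 1),
      intervalIntegral.integral_const_mul, I1, I2]
    ring
  rw [this]
  unfold Lg
  apply intervalIntegral.integral_mono_on zero_le_one
  · exact (hc'.sub hd).intervalIntegrable 0 1
  · apply Continuous.intervalIntegrable
    exact (((c0.pow 2).add (c1.pow 2)).add
      ((continuous_const.add (hfc.comp g1)).mul (c2.pow 2))).sqrt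
  · intro t _
    exact calib _ _ _ _ _ (f_nonneg' A hA _) hk

lemma norm_eq' (Y Z : ℝ) : ‖pt 0 0 Z - pt 0 Y 0‖ = Real.sqrt (Y ^ 2 + Z ^ 2) := by
  rw [EuclideanSpace.norm_eq]
  simp [pt, Fin.sum_univ_three]

lemma main_gt (A Y Z : ℝ) (hA : 0 < A) (hY : 0 < Y) (hY2 : Y ≤ 1 / 2) (hZ : 0 < Z) :
    Real.sqrt (Y ^ 2 + Z ^ 2) < dg A (pt 0 0 Z) (pt 0 Y 0) := by
  set D := Real.sqrt (Y ^ 2 + Z ^ 2) with hD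
  have hDp : 0 < D := Real.sqrt_pos.2 (by positivity)
  have hD2 : D ^ 2 = Y ^ 2 + Z ^ 2 := Real.sq_sqrt (by positivity)
  set k := Z / D with hk
  have hkp : 0 < k := by positivity
  have hk2 : k ^ 2 = 1 - (Y / D) ^ 2 := by
    rw [hk]; field_simp; linarith
  have hk1 : k ^ 2 ≤ 1 := by rw [hk2]; have := sq_nonneg (Y / D); linarith
  have hfc : Continuous (f A) := by unfold f; fun_prop
  have hh : Continuous (fun y => Real.sqrt (1 - k ^ 2 / (1 + f A y))) := by
    refine (continuous_const.sub (continuous_const.div (continuous_const.add hfc) ?_)).sqrt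
    intro y; have := f_nonneg' A hA y; show 1 + f A y ≠ 0; positivity
  have hYD : 0 ≤ Y / D := by positivity
  have key : Y * (Y / D) < ∫ y in (0:ℝ)..Y, Real.sqrt (1 - k ^ 2 / (1 + f A y)) := by
    have e : Y * (Y / D) = ∫ y in (0:ℝ)..Y, (Y / D) := by simp [mul_div_assoc]
    rw [e]
    apply intervalIntegral.integral_lt_integral_of_continuousOn_of_le_of_exists_lt hY
      continuousOn_const hh.continuousOn
    · intro y _
      apply Real.le_sqrt_of_sq_le
      have := div_le_self (sq_nonneg k) (by linarith [f_nonneg' A hA y] : 1 ≤ 1 + f A y)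
      linarith
    · refine ⟨0, ⟨le_refl _, hY.le⟩, ?_⟩
      apply Real.lt_sqrt_of_sq_lt
      have hf : 0 < f A 0 := by simp [f]; positivity
      have := div_lt_self (by positivity : 0 < k ^ 2) (by linarith : 1 < 1 + f A 0)
      linarith
  have hsum : D = Y * (Y / D) + k * Z := by
    rw [hk]; field_simp; linarith
  refine lt_of_lt_of_le (b := (∫ y in (0:ℝ)..Y, Real.sqrt (1 - k ^ 2 / (1 + f A y))) + k * Z)
    (by linarith) ?_
  unfold dg
  apply le_csInf
  · refine ⟨_, fun t => pt 0 0 Z + t • (pt 0 Y 0 - pt 0 0 Z), ?_, ?_, ?_, rfl⟩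
    · fun_prop
    · simp
    · simp
  · rintro L ⟨γ, hγ, h0, h1, rfl⟩
    exact Lg_ge A k Y Z hA hk1 γ hγ h0 h1

/-- The geodesic distance between `u = (0,0,aε)` and `c = (0,bε,0)` is
strictly greater than the Euclidean distance `‖u − c‖ = bε√(a²/b² + 1)`. -/
theorem dg_uc_gt_euclidean (A : ℝ) (hA0 : 0 < A) (hA : A ≤ 3 / 8)
    (ε b : ℝ) (hε0 : 0 < ε) (hε1 : ε ≤ 1) (hb : 0 < b) (hbε : b * ε ≤ 1 / 2) :
    ‖pt 0 0 (a * ε) - pt 0 (b * ε) 0‖ < dg A (pt 0 0 (a * ε)) (pt 0 (b * ε) 0) ∧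
    ‖pt 0 0 (a * ε) - pt 0 (b * ε) 0‖ = b * ε * Real.sqrt (a ^ 2 / b ^ 2 + 1) := by
  have ha : 0 < a := by unfold a; positivity
  constructor
  · rw [norm_eq']
    exact main_gt A _ _ hA0 (by positivity) hbε (by positivity)
  · rw [norm_eq']
    have : (b * ε) ^ 2 + (a * ε) ^ 2 = (b * ε) ^ 2 * (a ^ 2 / b ^ 2 + 1) := by
      field_simp; ring
    rw [this, Real.sqrt_mul (by positivity), Real.sqrt_sq (by positivity)]
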